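/- Let B := {z ∈ ℍ : ‖z‖ < 1} be the open unit ball of ℍ. If f : B → ℍ is real-analytic on B (as a map of ℝ⁴), pseudoconformal at every point of B, maps B into B, and satisfies f(0) = 0, then ‖f(z)‖ ≤ ‖z‖ for every z ∈ B. (Paper's Theorem 3.36, Schwarz-type lemma, for one quaternion variable; note that every ℍ-homogeneous norm on ℍ, i.e. a norm with ‖c z‖ = |c| ‖z‖ for all c ∈ ℍ, is a positive multiple of the Euclidean norm, so this is the full content of the theorem when n = m = 1.) -/

import Mathlib

open scoped Quaternion

/-- `f` is pseudoconformal at `ξ`: it is Fréchet differentiable over `ℝ` at `ξ` and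
its derivative has the form `h ↦ a * h * b` with nonzero quaternions `a`, `b`. -/
def Pseudoconformal (f : ℍ[ℝ] → ℍ[ℝ]) (ξ : ℍ[ℝ]) : Prop :=
  ∃ (A : ℍ[ℝ] →L[ℝ] ℍ[ℝ]) (a b : ℍ[ℝ]), a ≠ 0 ∧ b ≠ 0 ∧
    HasFDerivAt f A ξ ∧ ∀ h : ℍ[ℝ], A h = a * h * b

def qI : ℍ[ℝ] := ⟨0, 1, 0, 0⟩
def qJ : ℍ[ℝ] := ⟨0, 0, 1, 0⟩
def qK : ℍ[ℝ] := ⟨0, 0, 0, 1⟩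

@[simp] theorem qI_re : qI.re = 0 := rfl
@[simp] theorem qI_imI : qI.imI = 1 := rfl
@[simp] theorem qI_imJ : qI.imJ = 0 := rfl
@[simp] theorem qI_imK : qI.imK = 0 := rfl
@[simp] theorem qJ_re : qJ.re = 0 := rfl
@[simp] theorem qJ_imI : qJ.imI = 0 := rfl
@[simp] theorem qJ_imJ : qJ.imJ = 1 := rfl
@[simp] theorem qJ_imK : qJ.imK = 0 := rfl
@[simp] theorem qK_re : qK.re = 0 := rfl
@[simp] theorem qK_imI : qK.imI = 0 := rfl
@[simp] theorem qK_imJ : qK.imJ = 0 := rfl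
@[simp] theorem qK_imK : qK.imK = 1 := rfl

theorem q_expand (l : ℍ[ℝ]) :
    l = l.re • (1 : ℍ[ℝ]) + l.imI • qI + l.imJ • qJ + l.imK • qK := by
  ext <;> simp

theorem q_inner (x y : ℍ[ℝ]) : inner ℝ x y =
    x.re * y.re + x.imI * y.imI + x.imJ * y.imJ + x.imK * y.imK := by
  rw [Quaternion.inner_def]; simp

/-- Koszul-type computation of the second derivative of a conformal map. -/
theorem koszul (T : ℍ[ℝ] → ℍ[ℝ] → ℍ[ℝ]) (A : ℍ[ℝ] →L[ℝ] ℍ[ℝ]) (S : ℝ) (s : ℍ[ℝ] → ℝ)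
    (c : ℍ[ℝ]) (hA : Function.Surjective A)
    (hsym : ∀ l h, T l h = T h l)
    (hAA : ∀ h k, inner ℝ (A h) (A k) = S * inner ℝ h k)
    (hT : ∀ l h k, inner ℝ (T l h) (A k) + inner ℝ (A h) (T l k) = s l * inner ℝ h k)
    (hs : ∀ l, s l = 4 * S * inner ℝ l (star c)) (l h : ℍ[ℝ]) :
    T l h = A (l * c * h + h * c * l) := by
  refine ext_inner_right ℝ fun y => ?_
  obtain ⟨k, rfl⟩ := hA y
  rw [hAA]
  have h1 := hT l h k
  have h2 := hT h l k
  have h3 := hT k l h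
  rw [hsym h l] at h2
  rw [hsym k l, hsym k h, real_inner_comm (A h) (T l k)] at h3
  rw [real_inner_comm (T l k) (A h)] at h1
  rw [real_inner_comm (T h k) (A l)] at h2
  rw [real_inner_comm (T h k) (A l)] at h3
  try rw [real_inner_comm (T l k) (A h)] at h3
  have h4 : 2 * inner ℝ (T l h) (A k) =
      s l * inner ℝ h k + s h * inner ℝ l k - s k * inner ℝ l h := by
    linarith [real_inner_comm (T l k) (A h), real_inner_comm (T h k) (A l)]
  rw [hs, hs, hs] at h4
  have h5 : 2 * inner ℝ (l * c * h + h * c * l) k =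
      4 * inner ℝ l (star c) * inner ℝ h k + 4 * inner ℝ h (star c) * inner ℝ l k
        - 4 * inner ℝ k (star c) * inner ℝ l h := by
    simp only [q_inner]
    simp
    ring
  linear_combination h4 / 2 - S / 2 * h5

theorem eps_zero (e : ℍ[ℝ] →L[ℝ] ℍ[ℝ])
    (he : ∀ l h k, h * e l * k + k * e l * h = l * e h * k + k * e h * l) (l : ℍ[ℝ]) :
    e l = 0 := by
  have key : e 1 = 0 ∧ e qI = 0 ∧ e qJ = 0 ∧ e qK = 0 := by
    have a1 := he qI 1 1
    have a2 := he qJ 1 1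
    have a3 := he qK 1 1
    have b1 := he 1 qI qI
    have b2 := he 1 qJ qJ
    have b3 := he 1 qK qK
    have c1 := he qI qJ qJ
    have c2 := he qJ qI qI
    have c3 := he qK qI qI
    clear he
    generalize e 1 = e0 at *
    generalize e qI = e1 at *
    generalize e qJ = e2 at *
    generalize e qK = e3 at *
    simp only [Quaternion.ext_iff] at *
    simp at *
    obtain ⟨a1w, a1x, a1y, a1z⟩ := a1
    obtain ⟨a2w, a2x, a2y, a2z⟩ := a2
    obtain ⟨a3w, a3x, a3y, a3z⟩ := a3
    obtain ⟨b1w, b1x, b1y, b1z⟩ := b1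
    obtain ⟨b2w, b2x, b2y, b2z⟩ := b2
    obtain ⟨b3w, b3x, b3y, b3z⟩ := b3
    obtain ⟨c1w, c1x, c1y, c1z⟩ := c1
    obtain ⟨c2w, c2x, c2y, c2z⟩ := c2
    obtain ⟨c3w, c3x, c3y, c3z⟩ := c3
    refine ⟨⟨?_, ?_, ?_, ?_⟩, ⟨?_, ?_, ?_, ?_⟩, ⟨?_, ?_, ?_, ?_⟩, ⟨?_, ?_, ?_, ?_⟩⟩ <;> linarith
  obtain ⟨h0, h1, h2, h3⟩ := key
  rw [q_expand l]
  simp [h0, h1, h2, h3]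

/-- Final estimate for the Moebius map. -/
theorem final_est (L : ℝ) (C : ℍ[ℝ])
    (hC : ∀ x : ℍ[ℝ], ‖x‖ < 1 → L * ‖x‖ ≤ ‖1 + C * x‖) (x : ℍ[ℝ]) (hx : ‖x‖ < 1)
    (hu : 1 + C * x ≠ 0)
    (hnz : ∀ x : ℍ[ℝ], ‖x‖ < 1 → 1 + C * x ≠ 0) :
    L * ‖x‖ / ‖1 + C * x‖ ≤ ‖x‖ := by
  have hC1 : ‖C‖ ≤ 1 := by
    by_contra hcon
    push Not at hcon
    have hC0 : C ≠ 0 := by rintro rfl; simp at hcon; linarith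
    apply hnz (-C⁻¹)
    · rw [norm_neg, norm_inv]; exact inv_lt_one_of_one_lt₀ hcon
    · simp [hC0]
  have hLC : L ≤ 1 - ‖C‖ := by
    have ht : ∀ t : ℝ, 0 < t → t < 1 → L * t ≤ 1 - ‖C‖ * t := by
      intro t ht0 ht1
      by_cases hC0 : C = 0
      · subst hC0
        have := hC (t : ℍ[ℝ]) (by rw [Quaternion.norm_coe, Real.norm_of_nonneg ht0.le]; exact ht1)
        rw [Quaternion.norm_coe, Real.norm_of_nonneg ht0.le] at this
        simpa using this
      · have hn : ‖C‖ ≠ 0 := norm_ne_zero_iff.mpr hC0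
        have hnorm : ‖-((t * ‖C‖) • C⁻¹)‖ = t := by
          rw [norm_neg, norm_smul, norm_inv, Real.norm_of_nonneg (by positivity)]
          field_simp
        have := hC (-((t * ‖C‖) • C⁻¹)) (by rw [hnorm]; exact ht1)
        rw [hnorm] at this
        have e : 1 + C * -((t * ‖C‖) • C⁻¹) = (((1 - ‖C‖ * t : ℝ)) : ℍ[ℝ]) := by
          rw [mul_neg, mul_smul_comm, mul_inv_cancel₀ hC0]
          ext <;> simp <;> ring
        rw [e, Quaternion.norm_coe, Real.norm_of_nonneg] at this
        · exact this
        · nlinarith [norm_nonneg C]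
    by_contra hcon
    push Not at hcon
    have hp : 0 < L + ‖C‖ := by linarith
    have := ht ((1 + 1 / (L + ‖C‖)) / 2) (by positivity) (by
      have : 1 / (L + ‖C‖) < 1 := by rw [div_lt_one hp]; linarith
      linarith)
    have h2 : (L + ‖C‖) * ((1 + 1 / (L + ‖C‖)) / 2) ≤ 1 := by linarith
    have h3 : (L + ‖C‖) * ((1 + 1 / (L + ‖C‖)) / 2) = ((L + ‖C‖) + 1) / 2 := by field_simp
    linarith
  have hpos : 0 < ‖1 + C * x‖ := norm_pos_iff.mpr hu
  rw [div_le_iff₀ hpos]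
  have h1 : 1 - ‖C‖ * ‖x‖ ≤ ‖1 + C * x‖ := by
    have := norm_sub_norm_le (1 : ℍ[ℝ]) (-(C * x))
    rw [norm_neg, norm_mul, norm_one, sub_neg_eq_add] at this
    exact this
  have h2 : L ≤ ‖1 + C * x‖ := by nlinarith [norm_nonneg C, norm_nonneg x]
  nlinarith [norm_nonneg x]

theorem pc_fderiv {f : ℍ[ℝ] → ℍ[ℝ]} {x : ℍ[ℝ]} (h : Pseudoconformal f x) :
    Function.Surjective (fderiv ℝ f x) ∧ Function.Injective (fderiv ℝ f x) ∧
    0 < ‖fderiv ℝ f x 1‖ ∧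
    (∀ h, ‖fderiv ℝ f x h‖ = ‖fderiv ℝ f x 1‖ * ‖h‖) ∧
    ∀ h k, inner ℝ (fderiv ℝ f x h) (fderiv ℝ f x k) =
      inner ℝ (fderiv ℝ f x 1) (fderiv ℝ f x 1) * inner ℝ h k := by
  obtain ⟨A, a, b, ha, hb, hA, hAab⟩ := h
  rw [hA.fderiv]
  have hn : ∀ h, ‖A h‖ = ‖A 1‖ * ‖h‖ := by
    intro h
    rw [hAab, hAab]
    simp only [norm_mul, norm_one]
    ring
  have hpos : 0 < ‖A 1‖ := by
    rw [hAab, norm_pos_iff]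
    simp [ha, hb]
  refine ⟨?_, ?_, hpos, hn, ?_⟩
  · intro y
    refine ⟨a⁻¹ * y * b⁻¹, ?_⟩
    rw [hAab]
    simp only [← mul_assoc]
    rw [mul_inv_cancel₀ ha, one_mul, mul_assoc, inv_mul_cancel₀ hb, mul_one]
  · intro y z hyz
    rw [hAab, hAab] at hyz
    exact mul_left_cancel₀ ha (mul_right_cancel₀ hb hyz)
  · intro h k
    rw [real_inner_eq_norm_add_mul_self_sub_norm_mul_self_sub_norm_mul_self_div_two (A h),
      ← map_add, hn, hn h, hn k,
      real_inner_eq_norm_add_mul_self_sub_norm_mul_self_sub_norm_mul_self_div_two h,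
      real_inner_self_eq_norm_mul_norm]
    ring

theorem exists_c (f : ℍ[ℝ] → ℍ[ℝ])
    (han : AnalyticOnNhd ℝ f (Metric.ball (0 : ℍ[ℝ]) 1))
    (hpc : ∀ ξ ∈ Metric.ball (0 : ℍ[ℝ]) 1, Pseudoconformal f ξ) :
    ∃ c : ℍ[ℝ] → ℍ[ℝ], ∀ x ∈ Metric.ball (0 : ℍ[ℝ]) 1, DifferentiableAt ℝ c x ∧
      ∀ l h, fderiv ℝ (fderiv ℝ f) x l h = fderiv ℝ f x (l * c x * h + h * c x * l) := by
  set M := fderiv ℝ f with hM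
  have hMan : AnalyticOnNhd ℝ M (Metric.ball (0 : ℍ[ℝ]) 1) := han.fderiv
  set S : ℍ[ℝ] → ℝ := fun x => inner ℝ (M x 1) (M x 1) with hS
  have hMd : ∀ x ∈ Metric.ball (0 : ℍ[ℝ]) 1, HasFDerivAt M (fderiv ℝ M x) x :=
    fun x hx => (hMan x hx).differentiableAt.hasFDerivAt
  have hMh : ∀ h : ℍ[ℝ], ∀ x ∈ Metric.ball (0 : ℍ[ℝ]) 1,
      HasFDerivAt (fun y => M y h) ((fderiv ℝ M x).flip h) x := by
    intro h x hx
    have := (hMd x hx).clm_apply (hasFDerivAt_const h x)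
    simpa using this
  have hSan : ∀ x ∈ Metric.ball (0 : ℍ[ℝ]) 1, ContDiffAt ℝ 2 S x := by
    intro x hx
    have h1 : ContDiffAt ℝ 2 (fun y => M y 1) x :=
      (hMan x hx).contDiffAt.clm_apply contDiffAt_const
    exact h1.inner ℝ h1
  have hSd : ∀ x ∈ Metric.ball (0 : ℍ[ℝ]) 1, DifferentiableAt ℝ S x :=
    fun x hx => (hSan x hx).differentiableAt (by norm_num)
  have hS2 : ∀ x ∈ Metric.ball (0 : ℍ[ℝ]) 1, DifferentiableAt ℝ (fderiv ℝ S) x :=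
    fun x hx => ((hSan x hx).fderiv_right (m := 1) (by norm_num)).differentiableAt (by norm_num)
  have hSpos : ∀ x ∈ Metric.ball (0 : ℍ[ℝ]) 1, 0 < S x := by
    intro x hx
    have := (pc_fderiv (hpc x hx)).2.2.1
    simp only [hS, real_inner_self_eq_norm_mul_norm]
    positivity
  refine ⟨fun x => (4 * S x)⁻¹ • (fderiv ℝ S x 1 • (1 : ℍ[ℝ]) - fderiv ℝ S x qI • qI
    - fderiv ℝ S x qJ • qJ - fderiv ℝ S x qK • qK), fun x hx => ⟨?_, ?_⟩⟩
  · have e := fun q : ℍ[ℝ] =>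
      ((hS2 x hx).clm_apply (differentiableAt_const q)).smul_const q
    refine DifferentiableAt.fun_smul ?_ ((((e 1).sub (e qI)).sub (e qJ)).sub (e qK))
    exact ((hSd x hx).const_mul 4).inv (by have := hSpos x hx; positivity)
  · obtain ⟨hsurj, hinj, -, -, hin⟩ := pc_fderiv (hpc x hx)
    refine koszul (fun l h => fderiv ℝ M x l h) (M x) (S x) (fun l => fderiv ℝ S x l) _ hsurj
      ?_ hin ?_ ?_
    · intro l h
      exact ((han x hx).contDiffAt (n := ⊤)).isSymmSndFDerivAt_of_omega l h
    · intro l h k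
      have h1 := (hMh h x hx).inner ℝ (hMh k x hx)
      have h2 := (hSd x hx).hasFDerivAt.mul_const (inner ℝ h k)
      have h3 : (fun y => inner ℝ (M y h) (M y k)) =ᶠ[nhds x] fun y => S y * inner ℝ h k := by
        filter_upwards [Metric.isOpen_ball.mem_nhds hx] with y hy
        exact (pc_fderiv (hpc y hy)).2.2.2.2 h k
      have h4 := DFunLike.congr_fun (h1.unique (h2.congr_of_eventuallyEq h3)) l
      simp [fderivInnerCLM_apply] at h4
      linarith
    · intro l
      have hp := hSpos x hx
      conv_lhs => rw [q_expand l]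
      simp only [map_add, map_smul, q_inner]
      simp
      field_simp

set_option synthInstance.maxHeartbeats 400000 in
set_option maxHeartbeats 1000000 in
theorem c_riccati (f : ℍ[ℝ] → ℍ[ℝ])
    (han : AnalyticOnNhd ℝ f (Metric.ball (0 : ℍ[ℝ]) 1))
    (hpc : ∀ ξ ∈ Metric.ball (0 : ℍ[ℝ]) 1, Pseudoconformal f ξ) (c : ℍ[ℝ] → ℍ[ℝ])
    (hc : ∀ x ∈ Metric.ball (0 : ℍ[ℝ]) 1, DifferentiableAt ℝ c x ∧
      ∀ l h, fderiv ℝ (fderiv ℝ f) x l h = fderiv ℝ f x (l * c x * h + h * c x * l))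
    (x : ℍ[ℝ]) (hx : x ∈ Metric.ball (0 : ℍ[ℝ]) 1) (l : ℍ[ℝ]) :
    fderiv ℝ c x l = c x * l * c x := by
  set M := fderiv ℝ f with hM
  have hMan : AnalyticOnNhd ℝ M (Metric.ball (0 : ℍ[ℝ]) 1) := han.fderiv
  set N := fderiv ℝ M with hN
  have hNan := hMan.fderiv
  have hsym : ∀ l h, fderiv ℝ N x l h = fderiv ℝ N x h l := fun l h =>
    ((hMan x hx).contDiffAt (n := ⊤)).isSymmSndFDerivAt_of_omega l h
  obtain ⟨hcd, hN2⟩ := hc x hx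
  have third : ∀ l h k, fderiv ℝ N x l h k = M x (h * fderiv ℝ c x l * k + k * fderiv ℝ c x l * h)
      + N x l (h * c x * k + k * c x * h) := by
    intro l h k
    have h1 := (((hNan x hx).differentiableAt.hasFDerivAt).clm_apply
      (hasFDerivAt_const h x)).clm_apply (hasFDerivAt_const k x)
    have hcc := ((hcd.hasFDerivAt.const_mul h).mul_const' k).add
      ((hcd.hasFDerivAt.const_mul k).mul_const' h)
    have h2 := ((hMan x hx).differentiableAt.hasFDerivAt).clm_apply hcc
    have h3 : (fun y => N y h k) =ᶠ[nhds x] fun y => M y (h * c y * k + k * c y * h) := by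
      filter_upwards [Metric.isOpen_ball.mem_nhds hx] with y hy
      exact (hc y hy).2 h k
    have h4 := DFunLike.congr_fun (h1.unique (h2.congr_of_eventuallyEq h3)) l
    simpa using h4
  have hinj := (pc_fderiv (hpc x hx)).2.1
  set e : ℍ[ℝ] →L[ℝ] ℍ[ℝ] := fderiv ℝ c x - (ContinuousLinearMap.mul ℝ ℍ[ℝ]).flip (c x) ∘L
    (ContinuousLinearMap.mul ℝ ℍ[ℝ] (c x)) with he
  have hel : ∀ l, e l = fderiv ℝ c x l - c x * l * c x := by intro l; simp [he]
  have := eps_zero e (by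
    intro l h k
    have h1 := third l h k
    rw [hsym, third h l k, hN2, hN2, ← map_add, ← map_add] at h1
    have h2 := hinj h1
    rw [hel, hel]
    have h3 : h * (fderiv ℝ c x l - c x * l * c x) * k + k * (fderiv ℝ c x l - c x * l * c x) * h
      - (l * (fderiv ℝ c x h - c x * h * c x) * k + k * (fderiv ℝ c x h - c x * h * c x) * l) = 0 := by
      rw [← sub_eq_zero] at h2
      rw [← neg_eq_zero, ← h2]
      noncomm_ring
    exact sub_eq_zero.mp h3) l
  rw [hel] at this
  exact sub_eq_zero.mp this

/-- Along rays, the Riccati equation integrates to `(1 + C x) c(x) = -C`. -/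
theorem c_formula (c : ℍ[ℝ] → ℍ[ℝ])
    (hcd : ∀ x ∈ Metric.ball (0 : ℍ[ℝ]) 1, DifferentiableAt ℝ c x)
    (hc : ∀ x ∈ Metric.ball (0 : ℍ[ℝ]) 1, ∀ l, fderiv ℝ c x l = c x * l * c x)
    (x : ℍ[ℝ]) (hx : x ∈ Metric.ball (0 : ℍ[ℝ]) 1) :
    (1 + (-c 0) * x) * c x = c 0 := by
  have hmem : ∀ t ∈ Set.Icc (0 : ℝ) 1, t • x ∈ Metric.ball (0 : ℍ[ℝ]) 1 := by
    intro t ht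
    rw [mem_ball_zero_iff] at hx ⊢
    rw [norm_smul, Real.norm_of_nonneg ht.1]
    nlinarith [ht.2, norm_nonneg x]
  set C := -c 0 with hC
  have hray : ∀ t ∈ Set.Icc (0 : ℝ) 1,
      HasDerivAt (fun s : ℝ => c (s • x)) (c (t • x) * x * c (t • x)) t := by
    intro t ht
    have h1 : HasDerivAt (fun s : ℝ => s • x) x t := by
      simpa using (hasDerivAt_id t).smul_const x
    have := (hcd _ (hmem t ht)).hasFDerivAt.comp_hasDerivAt t h1
    rwa [hc _ (hmem t ht)] at this
  set w : ℝ → ℍ[ℝ] := fun t => (1 + C * (t • x)) * c (t • x) + C with hw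
  have hwd : ∀ t ∈ Set.Icc (0 : ℝ) 1, HasDerivAt w (w t * (x * c (t • x))) t := by
    intro t ht
    have h1 : HasDerivAt (fun s : ℝ => s • x) x t := by
      simpa using (hasDerivAt_id t).smul_const x
    have h2 := (((h1.const_mul C).const_add 1).mul (hray t ht)).add_const C
    refine h2.congr_deriv ?_
    simp only [hw]
    noncomm_ring
  have hcont : ContinuousOn (fun t : ℝ => c (t • x)) (Set.Icc 0 1) :=
    fun t ht => (hray t ht).continuousAt.continuousWithinAt
  obtain ⟨K, hK⟩ := isCompact_Icc.exists_bound_of_continuousOn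
    ((continuousOn_const (c := x)).mul hcont)
  have h0 := eq_zero_of_abs_deriv_le_mul_abs_self_of_eq_zero_right (f := w)
    (f' := fun t => w t * (x * c (t • x))) (K := K) (a := 0) (b := 1)
    (fun t ht => (hwd t ht).continuousAt.continuousWithinAt)
    (fun t ht => (hwd t (Set.Ico_subset_Icc_self ht)).hasDerivWithinAt)
    (by simp [hw, hC])
    (fun t ht => by
      rw [norm_mul, mul_comm]
      exact mul_le_mul_of_nonneg_right (hK t (Set.Ico_subset_Icc_self ht)) (norm_nonneg _))
    1 (by simp)
  simp only [hw, one_smul] at h0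
  rw [eq_neg_of_add_eq_zero_left h0, hC, neg_neg]

theorem f_formula (f : ℍ[ℝ] → ℍ[ℝ])
    (han : AnalyticOnNhd ℝ f (Metric.ball (0 : ℍ[ℝ]) 1))
    (hpc : ∀ ξ ∈ Metric.ball (0 : ℍ[ℝ]) 1, Pseudoconformal f ξ) (h0 : f 0 = 0) :
    ∃ C : ℍ[ℝ], ∀ x ∈ Metric.ball (0 : ℍ[ℝ]) 1, 1 + C * x ≠ 0 ∧
      f x = fderiv ℝ f 0 (x * (1 + C * x)⁻¹) := by
  obtain ⟨c, hc⟩ := exists_c f han hpc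
  have hcf := c_formula c (fun x hx => (hc x hx).1) (c_riccati f han hpc c hc)
  set C := -c 0 with hC
  have hC' : c 0 = -C := by simp [hC]
  have hz : (0 : ℍ[ℝ]) ∈ Metric.ball (0 : ℍ[ℝ]) 1 := by simp
  have hpre : IsPreconnected (Metric.ball (0 : ℍ[ℝ]) 1) := (convex_ball _ _).isPreconnected
  have hu : ∀ x ∈ Metric.ball (0 : ℍ[ℝ]) 1, 1 + C * x ≠ 0 := by
    intro x hx hu
    have h1 := hcf x hx
    rw [hu, zero_mul, hC'] at h1
    have h2 : C = 0 := by simpa using h1.symm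
    rw [h2] at hu
    simp at hu
  have hcv : ∀ x ∈ Metric.ball (0 : ℍ[ℝ]) 1, c x * (1 + x * C) = -C := by
    intro x hx
    apply mul_left_cancel₀ (hu x hx)
    rw [← mul_assoc, hcf x hx, hC']
    noncomm_ring
  have hMd : ∀ x ∈ Metric.ball (0 : ℍ[ℝ]) 1,
      HasFDerivAt (fderiv ℝ f) (fderiv ℝ (fderiv ℝ f) x) x :=
    fun x hx => (han.fderiv x hx).differentiableAt.hasFDerivAt
  have hinv : ∀ h : ℍ[ℝ], ∀ x ∈ Metric.ball (0 : ℍ[ℝ]) 1,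
      fderiv ℝ f x ((1 + x * C) * h * (1 + C * x)) = fderiv ℝ f 0 h := by
    intro h x hx
    have hd : ∀ y ∈ Metric.ball (0 : ℍ[ℝ]) 1,
        HasFDerivAt (fun y => fderiv ℝ f y ((1 + y * C) * h * (1 + C * y)))
          (0 : ℍ[ℝ] →L[ℝ] ℍ[ℝ]) y := by
      intro y hy
      have h1 := (((hasFDerivAt_id (𝕜 := ℝ) y).mul_const' C).const_add 1).mul_const' h
      have h2 := ((hasFDerivAt_id (𝕜 := ℝ) y).const_mul C).const_add 1
      have h3 := (hMd y hy).clm_apply (h1.mul' h2)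
      refine h3.congr_fderiv ?_
      ext1 l
      simp only [add_apply, ContinuousLinearMap.comp_apply,
        ContinuousLinearMap.flip_apply, (hc y hy).2]
      rw [← map_add]
      have e1 := hcf y hy
      have e2 := hcv y hy
      rw [hC'] at e1
      simp
      simp only [← map_add]
      convert map_zero (fderiv ℝ f y) using 2
      have e3 : l * c y * ((1 + y * C) * h * (1 + C * y)) = l * (c y * (1 + y * C)) * h * (1 + C * y) := by
        noncomm_ring
      have e4 : (1 + y * C) * h * (1 + C * y) * c y * l = (1 + y * C) * h * ((1 + C * y) * c y) * l := by
        noncomm_ring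
      rw [e3, e4, e1, e2]
      noncomm_ring
    have := Metric.isOpen_ball.is_const_of_fderiv_eq_zero (𝕜 := ℝ) hpre
      (fun y hy => (hd y hy).differentiableAt.differentiableWithinAt)
      (fun y hy => (hd y hy).fderiv) hx hz
    simpa using this
  refine ⟨C, fun x hx => ⟨hu x hx, ?_⟩⟩
  have hR : ∀ y ∈ Metric.ball (0 : ℍ[ℝ]) 1, ∃ R' : ℍ[ℝ] →L[ℝ] ℍ[ℝ],
      HasFDerivAt (fun y : ℍ[ℝ] => y * (1 + C * y)⁻¹) R' y ∧
      ∀ h, R' ((1 + y * C) * h * (1 + C * y)) = h := by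
    intro y hy
    have h2 := ((hasFDerivAt_id (𝕜 := ℝ) y).const_mul C).const_add 1
    have h3 := (hasFDerivAt_inv' (𝕜 := ℝ) (hu y hy)).comp y h2
    refine ⟨_, (hasFDerivAt_id (𝕜 := ℝ) y).mul' h3, fun h => ?_⟩
    simp
    have hne := hu y hy
    set u := 1 + C * y with hudef
    have hcm : C * (1 + y * C) = u * C := by rw [hudef]; noncomm_ring
    have e1 : y * (u⁻¹ * (C * ((1 + y * C) * h * u)) * u⁻¹) =
        y * (u⁻¹ * (C * (1 + y * C)) * h * (u * u⁻¹)) := by noncomm_ring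
    have e2 : (1 + y * C) * h * u * u⁻¹ = (1 + y * C) * h * (u * u⁻¹) := by noncomm_ring
    have e3 : u⁻¹ * (u * C) = C := by rw [← mul_assoc, inv_mul_cancel₀ hne, one_mul]
    rw [e1, e2, hcm, e3, mul_inv_cancel₀ hne]
    noncomm_ring
  have hv : ∀ y ∈ Metric.ball (0 : ℍ[ℝ]) 1, 1 + y * C ≠ 0 := by
    intro y hy hv
    have h1 := hcv y hy
    rw [hv, mul_zero] at h1
    have h2 : C = 0 := by simpa using h1.symm
    rw [h2] at hv
    simp at hv
  have hg : ∀ y ∈ Metric.ball (0 : ℍ[ℝ]) 1,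
      HasFDerivAt (fun y : ℍ[ℝ] => fderiv ℝ f 0 (y * (1 + C * y)⁻¹)) (fderiv ℝ f y) y := by
    intro y hy
    obtain ⟨R', hR1, hR2⟩ := hR y hy
    refine ((fderiv ℝ f 0).hasFDerivAt.comp y hR1).congr_fderiv ?_
    ext1 k
    have hk : k = (1 + y * C) * ((1 + y * C)⁻¹ * k * (1 + C * y)⁻¹) * (1 + C * y) := by
      simp only [← mul_assoc]
      rw [mul_inv_cancel₀ (hv y hy), one_mul, mul_assoc, inv_mul_cancel₀ (hu y hy), mul_one]
    rw [hk, hinv _ y hy, ContinuousLinearMap.comp_apply, hR2]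
  exact Metric.isOpen_ball.eqOn_of_fderiv_eq hpre
    (fun y hy => (han y hy).differentiableAt.differentiableWithinAt)
    (fun y hy => (hg y hy).differentiableAt.differentiableWithinAt)
    (fun y hy => (hg y hy).fderiv.symm) hz (by simp [h0]) hx

/-- Paper's Theorem 3.36 (Schwarz-type lemma) for one quaternion variable:
a real-analytic pseudoconformal self-map of the open unit ball of `ℍ` fixing `0`
satisfies `‖f z‖ ≤ ‖z‖`. -/
theorem stmt_17 (f : ℍ[ℝ] → ℍ[ℝ])
    (han : AnalyticOnNhd ℝ f (Metric.ball (0 : ℍ[ℝ]) 1))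
    (hpc : ∀ ξ ∈ Metric.ball (0 : ℍ[ℝ]) 1, Pseudoconformal f ξ)
    (hmaps : Set.MapsTo f (Metric.ball (0 : ℍ[ℝ]) 1) (Metric.ball (0 : ℍ[ℝ]) 1))
    (h0 : f 0 = 0) :
    ∀ z ∈ Metric.ball (0 : ℍ[ℝ]) 1, ‖f z‖ ≤ ‖z‖ := by
  obtain ⟨C, hC⟩ := f_formula f han hpc h0
  have hz : (0 : ℍ[ℝ]) ∈ Metric.ball (0 : ℍ[ℝ]) 1 := by simp
  have hn := (pc_fderiv (hpc 0 hz)).2.2.2.1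
  have hf : ∀ x ∈ Metric.ball (0 : ℍ[ℝ]) 1,
      ‖f x‖ = ‖fderiv ℝ f 0 1‖ * ‖x‖ / ‖1 + C * x‖ := by
    intro x hx
    rw [(hC x hx).2, hn, norm_mul, norm_inv]
    ring
  intro z hz
  rw [hf z hz]
  refine final_est _ C ?_ z (by simpa using hz) (hC z hz).1
    (fun x hx => (hC x (by simpa using hx)).1)
  intro x hx
  have hx' : x ∈ Metric.ball (0 : ℍ[ℝ]) 1 := by simpa using hx
  have h1 := hmaps hx'
  rw [mem_ball_zero_iff, hf x hx', div_lt_one (norm_pos_iff.mpr (hC x hx').1)] at h1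
  exact h1.le
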